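/- arXiv:1104.1884 — 2 statements merged into one kernel-verified Lean document; each statement's English description precedes it below -/
import Mathlib

section
/- Let f : ℕ → (0,∞) be non-decreasing with f(n) → ∞, and suppose there exists K > 0 such that f(x+y) ≤ K·f(x)·f(y) for all positive integers x, y, and that limsup_{n→∞} (1/n)·log f(n) = 0. Then for every irreducible recurrent discrete-time Markov chain on a finite or countable state space, if there exist states i, j with E f(T_ij) < ∞ and E f(T_ji) < ∞, then E f(T_kℓ) < ∞ for all pairs of states k, ℓ. -/
/-!
The proof rests on decomposing a first hitting time at the first visit to another state: for
`t ≠ a`, the law of `T_xt` is the law of "hit `t` before `a`" plus the convolution of the law of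
"hit `a` before `t`" with that of `T_at` (`firstHit_decomp`). As `f` is monotone and the chain is
irreducible, finiteness of `E f(T_xt)` passes to both pieces (`tsum_hitAvoid_lt_top`,
`tsum_hitAvoid_swap_lt_top`), and with `f(x+y) ≤ K f(x) f(y)` finiteness is transitive
(`mom_trans`): from `T_xa` and `T_at` to `T_xt`. Hence `E f(T_ii) < ∞`, and `E f(T_ki) < ∞`
because `k` is visited with positive probability during an excursion from `i`. By transitivity
through `i` it only remains to bound `E f(T_il)`.

The law `F` of `T_il` solves the renewal equation `F = ν + μ * F`, where `μ` is the law of an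
excursion from `i` that avoids `l`, a measure of mass `< 1` by recurrence. The weight `f` is
replaced by the equivalent weight `g m = sup_n f (m+n) c^n`, which is finite for `c < 1` since `f`
grows subexponentially, and which satisfies both `g (m+a) ≤ c^{-a} g m` and
`g (m+a) ≤ K f(a) g m`. Using the first bound for `a < M` and the second for `a ≥ M`, with `M` large
and then `c` close to `1`, gives `∑ a, μ a * g (m+a) ≤ r * g m` with `r < 1`
(`exists_contracting_weight`). So the renewal equation bounds the truncated `g`-moments of `F` by
`(∑ g ν) / (1 - r)` uniformly in the truncation (`renewal_bound`).
-/

open Filter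
open scoped ENNReal

namespace MCPaper

variable {E : Type*}

open Classical in
/-- `hitAvoid P t a n x` is the probability that the chain with transition matrix `P`,
started at `x`, is at `t` at time `n` while avoiding both `t` and `a` at times `1,…,n-1`.
For `t = a` this is the distribution of the first hitting time of `t`. -/
noncomputable def hitAvoid (P : E → E → ℝ≥0∞) (t a : E) : ℕ → E → ℝ≥0∞
  | 0, _ => 0
  | 1, x => P x t
  | n + 2, x => ∑' k : E, if k = t ∨ k = a then 0 else P x k * hitAvoid P t a (n + 1) k

/-- `firstHit P i j n = P_i(T_ij = n)`, the probability that the first hitting time of `j`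
(first return time if `i = j`) starting from `i` equals `n`. -/
noncomputable def firstHit (P : E → E → ℝ≥0∞) (i j : E) (n : ℕ) : ℝ≥0∞ :=
  hitAvoid P j j n i

/-- `P` is a stochastic matrix. -/
def IsStochastic (P : E → E → ℝ≥0∞) : Prop := ∀ i, ∑' j : E, P i j = 1

/-- irreducibility: any state can be reached from any other state. -/
def IsIrreducible (P : E → E → ℝ≥0∞) : Prop := ∀ i j : E, ∃ n : ℕ, 0 < firstHit P i j n

/-- recurrence: `P_i(T_ii < ∞) = 1` for every state `i`. -/
def IsRecurrent (P : E → E → ℝ≥0∞) : Prop := ∀ i : E, ∑' n : ℕ, firstHit P i i n = 1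

/-- the generalized moment `E f(T_ij)` of the first hitting time of `j` from `i`. -/
noncomputable def momGen (f : ℕ → ℝ) (P : E → E → ℝ≥0∞) (i j : E) : ℝ≥0∞ :=
  ∑' n : ℕ, ENNReal.ofReal (f n) * firstHit P i j n

/-! ### Decomposition of first hitting times -/

section Chain

variable {S : Type*} {P : S → S → ℝ≥0∞}

lemma hitAvoid_zero (t a x : S) : hitAvoid P t a 0 x = 0 := by
  simp [hitAvoid]

lemma hitAvoid_le_one (hP : IsStochastic P) (t a : S) (n : ℕ) (x : S) :
    hitAvoid P t a n x ≤ 1 := by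
  classical
  induction n generalizing x with
  | zero => simp [hitAvoid]
  | succ n ih =>
    cases n with
    | zero =>
      simp only [hitAvoid]
      rw [← hP x]
      exact ENNReal.le_tsum t
    | succ n =>
      simp only [hitAvoid]
      rw [← hP x]
      refine ENNReal.tsum_le_tsum fun k => ?_
      split_ifs
      · exact zero_le
      · exact mul_le_of_le_one_right' (ih k)

/-- Decomposition of the first hitting time of `t` at the first visit to `a`. -/
lemma firstHit_decomp {t a : S} (hta : t ≠ a) (n : ℕ) (x : S) :
    firstHit P x t n = hitAvoid P t a n x +
      ∑ p ∈ Finset.HasAntidiagonal.antidiagonal n, hitAvoid P a t p.1 x * firstHit P a t p.2 := by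
  classical
  unfold firstHit
  induction n generalizing x with
  | zero => simp [hitAvoid]
  | succ n ih =>
    cases n with
    | zero => simp [hitAvoid, Finset.Nat.antidiagonal_succ]
    | succ n =>
      rw [Finset.Nat.sum_antidiagonal_succ]
      simp only [hitAvoid_zero, zero_mul, zero_add]
      rw [Finset.Nat.sum_antidiagonal_succ]
      simp only [hitAvoid, or_self]
      -- The step to `a` yields the `p = 1` term of the convolution, and the steps to the other
      -- states are handled by the induction hypothesis.
      have key : ∀ k : S, (if k = t then 0 else P x k * hitAvoid P t t (n + 1) k) =
          (if k = t ∨ k = a then 0 else P x k * hitAvoid P t a (n + 1) k) +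
          ((if k = a then P x a * hitAvoid P t t (n + 1) a else 0) +
            ∑ p ∈ Finset.HasAntidiagonal.antidiagonal n,
              (if k = a ∨ k = t then 0 else P x k * hitAvoid P a t (p.1 + 1) k) *
                hitAvoid P t t p.2 a) := by
        intro k
        by_cases hkt : k = t
        · subst hkt; simp [hta]
        by_cases hka : k = a
        · subst hka; simp [hkt]
        simp only [hkt, hka, or_self, if_false, zero_add]
        rw [ih k, Finset.Nat.sum_antidiagonal_succ, mul_add, hitAvoid_zero, zero_mul, zero_add,
          Finset.mul_sum]
        simp only [mul_assoc]
      simp_rw [key]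
      rw [ENNReal.tsum_add, ENNReal.tsum_add, tsum_ite_eq,
        Summable.tsum_finsetSum (fun _ _ => ENNReal.summable)]
      simp_rw [ENNReal.tsum_mul_right]

lemma hitAvoid_le_firstHit {t a : S} (hta : t ≠ a) (n : ℕ) (x : S) :
    hitAvoid P t a n x ≤ firstHit P x t n := by
  rw [firstHit_decomp hta]; exact le_self_add

lemma hitAvoid_mul_firstHit_le {t a : S} (hta : t ≠ a) (p q : ℕ) (x : S) :
    hitAvoid P a t p x * firstHit P a t q ≤ firstHit P x t (p + q) := by
  rw [firstHit_decomp hta (p + q) x]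
  refine le_trans ?_ le_add_self
  exact Finset.single_le_sum
    (f := fun p : ℕ × ℕ => hitAvoid P a t p.1 x * firstHit P a t p.2)
    (fun _ _ => zero_le) (Finset.HasAntidiagonal.mem_antidiagonal.2 (rfl : (p, q).1 + (p, q).2 = p + q))

/-- An excursion from `a` visits `t` with positive probability: otherwise the renewal equation
would force `T_at = ∞`. -/
lemma exists_hitAvoid_pos (hirr : IsIrreducible P) {t a : S} (hta : t ≠ a) :
    ∃ n, 0 < hitAvoid P t a n a := by
  by_contra! h
  have hz : ∀ n, firstHit P a t n = 0 := by
    intro n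
    induction n using Nat.strong_induction_on with
    | _ n ih =>
      rw [firstHit_decomp hta, le_antisymm (h n) zero_le, zero_add]
      refine Finset.sum_eq_zero fun p hp => ?_
      rw [Finset.HasAntidiagonal.mem_antidiagonal] at hp
      rcases Nat.eq_zero_or_pos p.1 with h0 | h0
      · rw [h0, hitAvoid_zero, zero_mul]
      · rw [ih p.2 (by omega), mul_zero]
  obtain ⟨n, hn⟩ := hirr a t
  exact hn.ne' (hz n)

/-- The excursions from `i` that avoid `l` have total mass less than one. -/
lemma tsum_hitAvoid_lt_one (hP : IsStochastic P) (hirr : IsIrreducible P) (hrec : IsRecurrent P)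
    {i l : S} (hil : i ≠ l) : ∑' n, hitAvoid P i l n i < 1 := by
  obtain ⟨p, hp⟩ := exists_hitAvoid_pos hirr hil.symm
  obtain ⟨q, hq⟩ := hirr l i
  have hle : ∑' n, hitAvoid P i l n i ≤ 1 := by
    rw [← hrec i]
    exact ENNReal.tsum_le_tsum fun n => hitAvoid_le_firstHit hil n i
  rw [← hrec i]
  refine ENNReal.tsum_lt_tsum (i := p + q) (ne_top_of_le_ne_top ENNReal.one_ne_top hle)
    (fun n => hitAvoid_le_firstHit hil n i) ?_
  rw [firstHit_decomp hil (p + q) i]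
  refine ENNReal.lt_add_right
    (ne_top_of_le_ne_top ENNReal.one_ne_top (hitAvoid_le_one hP _ _ _ _)) ?_
  refine ne_of_gt (lt_of_lt_of_le (ENNReal.mul_pos hp.ne' hq.ne') ?_)
  exact Finset.single_le_sum
    (f := fun p : ℕ × ℕ => hitAvoid P l i p.1 i * firstHit P l i p.2)
    (fun _ _ => zero_le) (Finset.HasAntidiagonal.mem_antidiagonal.2 (rfl : (p, q).1 + (p, q).2 = p + q))

end Chain

/-! ### Transfer of moments between hitting times -/

section Moments

variable {S : Type*} {P : S → S → ℝ≥0∞} {φ : ℕ → ℝ≥0∞}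

lemma tsum_hitAvoid_lt_top {x t a : S} (hta : t ≠ a)
    (h : ∑' n, φ n * firstHit P x t n < ⊤) : ∑' n, φ n * hitAvoid P t a n x < ⊤ :=
  lt_of_le_of_lt
    (ENNReal.tsum_le_tsum fun n => mul_le_mul_right (hitAvoid_le_firstHit hta n x) _) h

/-- If `q * ρ n ≤ σ (n + m)` with `q > 0`, a finite moment of `σ` gives one of `ρ`. -/
lemma tsum_lt_top_of_shift (hmono : Monotone φ) {ρ σ : ℕ → ℝ≥0∞} {q : ℝ≥0∞} (hq : 0 < q)
    (m : ℕ) (hle : ∀ n, q * ρ n ≤ σ (n + m)) (h : ∑' n, φ n * σ n < ⊤) :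
    ∑' n, φ n * ρ n < ⊤ := by
  have h1 : q * ∑' n, φ n * ρ n ≤ ∑' n, φ n * σ n := by
    rw [← ENNReal.tsum_mul_left]
    calc ∑' n, q * (φ n * ρ n) ≤ ∑' n, φ (n + m) * σ (n + m) := by
          refine ENNReal.tsum_le_tsum fun n => ?_
          rw [mul_left_comm]
          exact mul_le_mul' (hmono (Nat.le_add_right n m)) (hle n)
      _ ≤ ∑' n, φ n * σ n :=
          ENNReal.tsum_comp_le_tsum_of_injective (add_left_injective m) fun n => φ n * σ n
  by_contra! htop
  rw [top_le_iff.1 htop, ENNReal.mul_top hq.ne'] at h1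
  exact absurd (h1.trans_lt h) (lt_irrefl _)

lemma tsum_hitAvoid_swap_lt_top (hmono : Monotone φ) (hirr : IsIrreducible P) {x t a : S}
    (hta : t ≠ a) (h : ∑' n, φ n * firstHit P x t n < ⊤) :
    ∑' n, φ n * hitAvoid P a t n x < ⊤ := by
  obtain ⟨m, hm⟩ := hirr a t
  refine tsum_lt_top_of_shift hmono hm m (fun n => ?_) h
  rw [mul_comm]
  exact hitAvoid_mul_firstHit_le hta n m x

/-- From the return time to `i` to the hitting time of `i` from any other state. -/
lemma mom_of_return (hmono : Monotone φ) (hirr : IsIrreducible P) {i k : S} (hik : i ≠ k)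
    (h : ∑' n, φ n * firstHit P i i n < ⊤) : ∑' n, φ n * firstHit P k i n < ⊤ := by
  obtain ⟨m, hm⟩ := exists_hitAvoid_pos hirr hik.symm
  refine tsum_lt_top_of_shift hmono hm m (fun n => ?_) h
  rw [add_comm]
  exact hitAvoid_mul_firstHit_le hik m n i

lemma tsum_mul_conv (w ρ σ : ℕ → ℝ≥0∞) :
    ∑' n, w n * ∑ p ∈ Finset.HasAntidiagonal.antidiagonal n, ρ p.1 * σ p.2 =
      ∑' b, ∑' a, w (a + b) * (ρ a * σ b) := by
  rw [ENNReal.tsum_comm, ← ENNReal.tsum_prod,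
    ← (Finset.HasAntidiagonal.sigmaAntidiagonalEquivProd (A := ℕ)).tsum_eq, ENNReal.tsum_sigma']
  refine tsum_congr fun n => ?_
  rw [tsum_fintype, Finset.mul_sum, ← Finset.sum_coe_sort]
  refine Finset.sum_congr rfl fun p _ => ?_
  have := Finset.HasAntidiagonal.mem_antidiagonal.1 p.2
  simp [this]

lemma mom_trans {K : ℝ≥0∞} (hK : K ≠ ⊤) (hmono : Monotone φ)
    (hsub : ∀ x y, 0 < x → 0 < y → φ (x + y) ≤ K * φ x * φ y)
    (hirr : IsIrreducible P) {x a t : S} (hta : t ≠ a)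
    (h1 : ∑' n, φ n * firstHit P x a n < ⊤) (h2 : ∑' n, φ n * firstHit P a t n < ⊤) :
    ∑' n, φ n * firstHit P x t n < ⊤ := by
  simp_rw [firstHit_decomp hta _ x, mul_add]
  rw [ENNReal.tsum_add]
  refine ENNReal.add_lt_top.2 ⟨tsum_hitAvoid_swap_lt_top hmono hirr hta.symm h1, ?_⟩
  rw [tsum_mul_conv φ (fun n => hitAvoid P a t n x) (fun n => firstHit P a t n)]
  have h3 := tsum_hitAvoid_lt_top hta.symm h1
  calc ∑' b, ∑' c, φ (c + b) * (hitAvoid P a t c x * firstHit P a t b)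
      ≤ ∑' b, ∑' c, K * ((φ b * firstHit P a t b) * (φ c * hitAvoid P a t c x)) := by
        refine ENNReal.tsum_le_tsum fun b => ENNReal.tsum_le_tsum fun c => ?_
        rcases Nat.eq_zero_or_pos b with rfl | hb
        · simp [firstHit, hitAvoid_zero]
        rcases Nat.eq_zero_or_pos c with rfl | hc
        · simp [hitAvoid_zero]
        calc _ ≤ (K * φ c * φ b) * (hitAvoid P a t c x * firstHit P a t b) :=
              mul_le_mul_left (hsub c b hc hb) _
          _ = _ := by ring
    _ = K * ((∑' b, φ b * firstHit P a t b) * ∑' c, φ c * hitAvoid P a t c x) := by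
        simp_rw [ENNReal.tsum_mul_left, ENNReal.tsum_mul_right]
    _ < ⊤ := ENNReal.mul_lt_top hK.lt_top (ENNReal.mul_lt_top h2 h3)

end Moments

/-! ### Contracting weights and the renewal equation -/

section Renewal

/-- For a weight `φ` that is submultiplicative up to `K` and subexponential, and a measure `μ` on
the positive integers of mass `< 1` with finite `φ`-moment, an equivalent weight `g` in which
convolution with `μ` is a strict contraction. -/
lemma exists_contracting_weight {φ : ℕ → ℝ≥0∞} {K : ℝ≥0∞} (hK : K ≠ ⊤)
    (hmono : Monotone φ)
    (hsub : ∀ x y, 0 < x → 0 < y → φ (x + y) ≤ K * φ x * φ y)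
    (hexp : ∀ ε : ℝ, 0 < ε → ∀ m, ⨆ n, φ (m + n) * ENNReal.ofReal (Real.exp (-ε)) ^ n < ⊤)
    {μ : ℕ → ℝ≥0∞} (hμ0 : μ 0 = 0) (hμ : ∑' n, μ n < 1) (hμφ : ∑' n, φ n * μ n < ⊤) :
    ∃ (g : ℕ → ℝ≥0∞) (C r : ℝ≥0∞), C ≠ ⊤ ∧ r < 1 ∧ (∀ n, g n ≠ ⊤) ∧ (∀ n, φ n ≤ g n) ∧
      (∀ n, 0 < n → g n ≤ C * φ n) ∧ ∀ m, 0 < m → ∑' a, g (a + m) * μ a ≤ r * g m := by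
  set s := ∑' n, μ n with hs
  have htail : Tendsto (fun M => ∑' a, K * (φ (a + M) * μ (a + M))) atTop (nhds 0) := by
    have := ENNReal.Tendsto.const_mul (ENNReal.tendsto_sum_nat_add _ hμφ.ne) (a := K) (Or.inr hK)
    simpa only [mul_zero, ENNReal.tsum_mul_left] using this
  obtain ⟨M, hM⟩ := (htail.eventually_lt_const (tsub_pos_of_lt hμ)).exists
  set η := ∑' a, K * (φ (a + M) * μ (a + M)) with hη
  have hlim : Tendsto (fun ε : ℝ => (ENNReal.ofReal (Real.exp (-ε)) ^ M)⁻¹ * s + η)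
      (nhdsWithin 0 (Set.Ioi 0)) (nhds (1 * s + η)) := by
    refine Tendsto.add (ENNReal.Tendsto.mul_const ?_ (Or.inr hμ.ne_top)) tendsto_const_nhds
    have h1 : Continuous fun ε : ℝ => (ENNReal.ofReal (Real.exp (-ε)) ^ M)⁻¹ :=
      ((ENNReal.continuous_pow M).comp
        (ENNReal.continuous_ofReal.comp (Real.continuous_exp.comp continuous_neg))).inv
    have h2 := h1.tendsto 0
    simp only [neg_zero, Real.exp_zero, ENNReal.ofReal_one, one_pow, inv_one] at h2
    exact h2.mono_left nhdsWithin_le_nhds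
  have hlt : 1 * s + η < 1 := by
    rw [one_mul, add_comm]; exact lt_tsub_iff_right.1 hM
  obtain ⟨ε, hr, hε⟩ := ((hlim.eventually_lt_const hlt).and self_mem_nhdsWithin).exists
  have hε : 0 < ε := hε
  set c := ENNReal.ofReal (Real.exp (-ε)) with hc
  have hc0 : c ≠ 0 := by simpa [hc] using Real.exp_pos (-ε)
  have hctop : c ≠ ⊤ := ENNReal.ofReal_ne_top
  have hc1 : c ≤ 1 := by
    rw [hc, ENNReal.ofReal_le_one]; exact Real.exp_le_one_iff.2 (by linarith)
  let g : ℕ → ℝ≥0∞ := fun m => ⨆ n, φ (m + n) * c ^ n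
  have hgsub : ∀ a m, 0 < a → 0 < m → g (a + m) ≤ K * φ a * g m := by
    intro a m ha hm
    refine iSup_le fun n => ?_
    calc φ (a + m + n) * c ^ n ≤ K * φ a * φ (m + n) * c ^ n := by
          rw [add_assoc]
          exact mul_le_mul_left (hsub a (m + n) ha (by omega)) _
      _ = K * φ a * (φ (m + n) * c ^ n) := mul_assoc _ _ _
      _ ≤ K * φ a * g m := mul_le_mul_right (le_iSup (fun n => φ (m + n) * c ^ n) n) _
  have hgexp : ∀ a m, a ≤ M → g (a + m) ≤ (c ^ M)⁻¹ * g m := by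
    intro a m ha
    rw [← ENNReal.mul_le_iff_le_inv (pow_ne_zero _ hc0) (ENNReal.pow_ne_top hctop),
      ENNReal.mul_iSup]
    refine iSup_le fun n => le_trans ?_ (le_iSup (fun n => φ (m + n) * c ^ n) (a + n))
    calc c ^ M * (φ (a + m + n) * c ^ n) ≤ c ^ a * (φ (a + m + n) * c ^ n) :=
          mul_le_mul_left (pow_le_pow_right_of_le_one' hc1 ha) _
      _ = φ (m + (a + n)) * c ^ (a + n) := by
          rw [show a + m + n = m + (a + n) by ring, pow_add]; ring
  refine ⟨g, K * g 1, _, ENNReal.mul_ne_top hK (hexp ε hε 1).ne, hr, fun n => (hexp ε hε n).ne,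
    fun n => ?_, fun n hn => ?_, fun m hm => ?_⟩
  · simpa using le_iSup (fun k => φ (n + k) * c ^ k) 0
  · calc g n ≤ g (n + 1) := iSup_mono fun k => mul_le_mul_left (hmono (by omega)) _
      _ ≤ K * φ n * g 1 := hgsub n 1 hn one_pos
      _ = K * g 1 * φ n := by ring
  · rw [← ENNReal.summable.sum_add_tsum_nat_add' (k := M), add_mul]
    refine add_le_add ?_ ?_
    · calc ∑ a ∈ Finset.range M, g (a + m) * μ a
          ≤ ∑ a ∈ Finset.range M, (c ^ M)⁻¹ * g m * μ a :=
            Finset.sum_le_sum fun a ha =>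
              mul_le_mul_left (hgexp a m (Finset.mem_range.1 ha).le) _
        _ = (c ^ M)⁻¹ * g m * ∑ a ∈ Finset.range M, μ a := by rw [Finset.mul_sum]
        _ ≤ (c ^ M)⁻¹ * g m * s := mul_le_mul_right (ENNReal.sum_le_tsum _) _
        _ = (c ^ M)⁻¹ * s * g m := by ring
    · rw [hη, ← ENNReal.tsum_mul_right]
      refine ENNReal.tsum_le_tsum fun a => ?_
      rcases Nat.eq_zero_or_pos (a + M) with h0 | h0
      · rw [h0, hμ0]; simp
      · calc g (a + M + m) * μ (a + M) ≤ K * φ (a + M) * g m * μ (a + M) :=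
              mul_le_mul_left (hgsub _ _ h0 hm) _
          _ = _ := by ring

/-- A finite-valued solution `F` of the renewal equation `F = ν + μ * F` has finite `g`-moment if
`ν` does and convolution with `μ` contracts `g`-moments. -/
lemma renewal_bound {g μ ν F : ℕ → ℝ≥0∞} {r : ℝ≥0∞} (hr : r < 1) (hg : ∀ n, g n ≠ ⊤)
    (hF : ∀ n, F n ≠ ⊤) (hF0 : F 0 = 0)
    (hcontr : ∀ m, 0 < m → ∑' a, g (a + m) * μ a ≤ r * g m)
    (hren : ∀ n, F n = ν n + ∑ p ∈ Finset.HasAntidiagonal.antidiagonal n, μ p.1 * F p.2)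
    (hν : ∑' n, g n * ν n < ⊤) : ∑' n, g n * F n < ⊤ := by
  have hb : ∀ N, ∑ n ∈ Finset.range N, g n * F n ≤ (∑' n, g n * ν n) / (1 - r) := by
    intro N
    set G := ∑ n ∈ Finset.range N, g n * F n with hG
    have hGtop : G ≠ ⊤ := ENNReal.sum_ne_top.2 fun n _ => ENNReal.mul_ne_top (hg n) (hF n)
    -- Only values of `F` below `N` enter the renewal equation at times below `N`.
    let F' : ℕ → ℝ≥0∞ := fun n => if n < N then F n else 0
    have hF' : ∑' n, g n * F' n = G := by
      rw [tsum_eq_sum (s := Finset.range N)]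
      · exact Finset.sum_congr rfl fun n hn => by simp [F', Finset.mem_range.1 hn]
      · intro n hn; simp [F', Finset.mem_range] at hn ⊢; intro h; omega
    have h1 : G ≤ ∑' n, g n * ν n + r * G := by
      calc G ≤ ∑ n ∈ Finset.range N,
            (g n * ν n + g n * ∑ p ∈ Finset.HasAntidiagonal.antidiagonal n, μ p.1 * F' p.2) := by
            refine Finset.sum_le_sum fun n hn => ?_
            rw [hren n, mul_add]
            refine add_le_add le_rfl (mul_le_mul_right (Finset.sum_le_sum fun p hp => ?_) _)
            have : p.2 < N := by
              have := Finset.HasAntidiagonal.mem_antidiagonal.1 hp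
              have := Finset.mem_range.1 hn
              omega
            simp [F', this]
        _ ≤ ∑' n, (g n * ν n + g n * ∑ p ∈ Finset.HasAntidiagonal.antidiagonal n, μ p.1 * F' p.2) :=
            ENNReal.sum_le_tsum _
        _ = ∑' n, g n * ν n + ∑' b, ∑' a, g (a + b) * (μ a * F' b) := by
            rw [ENNReal.tsum_add, tsum_mul_conv]
        _ ≤ ∑' n, g n * ν n + ∑' b, r * (g b * F' b) := by
            refine add_le_add le_rfl (ENNReal.tsum_le_tsum fun b => ?_)
            rcases Nat.eq_zero_or_pos b with rfl | hb
            · simp [F', hF0]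
            · simp_rw [← mul_assoc, ENNReal.tsum_mul_right]
              exact mul_le_mul_left (hcontr b hb) _
        _ = ∑' n, g n * ν n + r * G := by rw [ENNReal.tsum_mul_left, hF']
    rw [ENNReal.le_div_iff_mul_le (Or.inl (tsub_pos_of_lt hr).ne')
      (Or.inl (ENNReal.sub_ne_top ENNReal.one_ne_top)), ENNReal.mul_sub (fun _ _ => hGtop),
      mul_one, mul_comm G r]
    exact tsub_le_iff_right.2 h1
  rw [ENNReal.tsum_eq_iSup_nat]
  exact lt_of_le_of_lt (iSup_le hb) (ENNReal.div_lt_top hν.ne (tsub_pos_of_lt hr).ne')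

end Renewal

/-! ### Subexponential growth and conclusion -/

/-- Subexponential growth in the form used for the weight `sup_n f (m+n) c^n`. -/
lemma iSup_lt_top_of_limsup {f : ℕ → ℝ} (hpos : ∀ n, 0 < f n)
    (hlog : limsup (fun n : ℕ => ((Real.log (f n) / n : ℝ) : EReal)) atTop = 0)
    (ε : ℝ) (hε : 0 < ε) (m : ℕ) :
    ⨆ n, ENNReal.ofReal (f (m + n)) * ENNReal.ofReal (Real.exp (-ε)) ^ n < ⊤ := by
  have h1 : ∀ᶠ n : ℕ in atTop, ((Real.log (f n) / n : ℝ) : EReal) < (ε : EReal) := by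
    refine eventually_lt_of_limsup_lt ?_
    rw [hlog]; exact_mod_cast hε
  have h2 : ∀ᶠ n : ℕ in atTop, f n * Real.exp (-(ε * n)) ≤ 1 := by
    filter_upwards [h1, eventually_gt_atTop 0] with n hn hn0
    have hn' : (0 : ℝ) < n := by exact_mod_cast hn0
    have h3 : Real.log (f n) < ε * n := (div_lt_iff₀ hn').1 (EReal.coe_lt_coe_iff.1 hn)
    calc f n * Real.exp (-(ε * n)) = Real.exp (Real.log (f n)) * Real.exp (-(ε * n)) := by
          rw [Real.exp_log (hpos n)]
      _ = Real.exp (Real.log (f n) - ε * n) := by rw [← Real.exp_add]; rfl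
      _ ≤ 1 := Real.exp_le_one_iff.2 (by linarith)
  obtain ⟨N, hN⟩ := eventually_atTop.1 h2
  -- The finitely many `n < N` are absorbed into the sum in the constant.
  set B := ∑ n ∈ Finset.range N, f n * Real.exp (-(ε * n)) with hB
  have hnn : ∀ n : ℕ, 0 ≤ f n * Real.exp (-(ε * n)) := fun n =>
    mul_nonneg (hpos n).le (Real.exp_pos _).le
  have hB0 : 0 ≤ B := Finset.sum_nonneg fun n _ => hnn n
  have hbd : ∀ n : ℕ, f n * Real.exp (-(ε * n)) ≤ B + 1 := by
    intro n
    rcases lt_or_ge n N with h | h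
    · have := Finset.single_le_sum (f := fun n : ℕ => f n * Real.exp (-(ε * n)))
        (fun n _ => hnn n) (Finset.mem_range.2 h)
      simp only [← hB] at this
      linarith
    · linarith [hN n h]
  refine lt_of_le_of_lt (iSup_le fun n => ?_)
    (ENNReal.ofReal_lt_top (r := (B + 1) * Real.exp (ε * m)))
  rw [← ENNReal.ofReal_pow (Real.exp_pos _).le, ← ENNReal.ofReal_mul (hpos _).le,
    ← Real.exp_nat_mul]
  refine ENNReal.ofReal_le_ofReal ?_
  calc f (m + n) * Real.exp (n * -ε)
      = f (m + n) * Real.exp (-(ε * (m + n : ℕ))) * Real.exp (ε * m) := by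
        rw [mul_assoc, ← Real.exp_add]; congr 2; push_cast; ring
    _ ≤ (B + 1) * Real.exp (ε * m) :=
        mul_le_mul_of_nonneg_right (hbd _) (Real.exp_pos _).le

theorem stmt_1 (f : ℕ → ℝ) (hpos : ∀ n, 0 < f n) (hmono : Monotone f)
    (htop : Tendsto f atTop atTop)
    (K : ℝ) (hK : 0 < K)
    (hsub : ∀ x y : ℕ, 0 < x → 0 < y → f (x + y) ≤ K * f x * f y)
    (hlog : limsup (fun n : ℕ => ((Real.log (f n) / n : ℝ) : EReal)) atTop = 0)
    (S : Type*) [Countable S] (P : S → S → ℝ≥0∞)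
    (hP : IsStochastic P) (hirr : IsIrreducible P) (hrec : IsRecurrent P)
    (i j : S) (hij : momGen f P i j < ⊤) (hji : momGen f P j i < ⊤) :
    ∀ k l : S, momGen f P k l < ⊤ := by
  unfold momGen at *
  set φ : ℕ → ℝ≥0∞ := fun n => ENNReal.ofReal (f n) with hφ
  have hφmono : Monotone φ := fun a b h => ENNReal.ofReal_le_ofReal (hmono h)
  have hφsub : ∀ x y, 0 < x → 0 < y → φ (x + y) ≤ ENNReal.ofReal K * φ x * φ y := by
    intro x y hx hy
    rw [hφ]
    simp only
    rw [← ENNReal.ofReal_mul hK.le, ← ENNReal.ofReal_mul (mul_pos hK (hpos x)).le]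
    exact ENNReal.ofReal_le_ofReal (hsub x y hx hy)
  have hKtop : ENNReal.ofReal K ≠ ⊤ := ENNReal.ofReal_ne_top
  have hii : ∑' n, φ n * firstHit P i i n < ⊤ := by
    by_cases h : i = j
    · subst h; exact hij
    · exact mom_trans hKtop hφmono hφsub hirr h hij hji
  have hki : ∀ k, ∑' n, φ n * firstHit P k i n < ⊤ := by
    intro k
    by_cases h : i = k
    · subst h; exact hii
    · exact mom_of_return hφmono hirr h hii
  intro k l
  by_cases hil : i = l
  · subst hil; exact hki k
  refine mom_trans hKtop hφmono hφsub hirr (Ne.symm hil) (hki k) ?_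
  obtain ⟨g, C, r, hC, hr, hg, hφg, hgφ, hcontr⟩ :=
    exists_contracting_weight hKtop hφmono hφsub (iSup_lt_top_of_limsup hpos hlog)
      (μ := fun n => hitAvoid P i l n i) (hitAvoid_zero _ _ _)
      (tsum_hitAvoid_lt_one hP hirr hrec hil) (tsum_hitAvoid_lt_top hil hii)
  refine lt_of_le_of_lt (ENNReal.tsum_le_tsum fun n => mul_le_mul_left (hφg n) _)
    (renewal_bound (ν := fun n => hitAvoid P l i n i) hr hg
      (fun n => ne_top_of_le_ne_top ENNReal.one_ne_top (hitAvoid_le_one hP _ _ _ _))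
      (hitAvoid_zero _ _ _) hcontr (fun n => firstHit_decomp (Ne.symm hil) n i) ?_)
  calc ∑' n, g n * hitAvoid P l i n i ≤ ∑' n, C * (φ n * hitAvoid P l i n i) := by
        refine ENNReal.tsum_le_tsum fun n => ?_
        rcases Nat.eq_zero_or_pos n with rfl | hn
        · simp [hitAvoid_zero]
        · rw [← mul_assoc]; exact mul_le_mul_left (hgφ n hn) _
    _ = C * ∑' n, φ n * hitAvoid P l i n i := ENNReal.tsum_mul_left
    _ < ⊤ := ENNReal.mul_lt_top hC.lt_top (tsum_hitAvoid_swap_lt_top hφmono hirr hil hii)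

end MCPaper
end

section
/- Let f : ℕ → (0,∞) be non-decreasing with f(n) → ∞, and suppose f belongs to the class G. Then there exists K > 0 such that f(x+y) ≤ K·f(x)·f(y) for all positive integers x, y. -/
/-!
The proof is by contraposition: if no constant `K` works, there are pairs `(X k + 1, Y k + 1)` with
`f (X k + Y k + 2) > k * 4 ^ k * f (X k + 1) * f (Y k + 1)`, and from them one builds an irreducible
recurrent chain that violates the defining property of the class `𝒢`.

The chain lives on `Option ℕ`. From the base state `some 0` it jumps according to a law `q` of full
support; every other state moves deterministically, `some (m + 1)` to `some m` and `none` to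
`some 0`. A jump to `some m` thus starts an excursion of length `m + 1` from the base. The law is
`q (some m) ∝ A m / f (m + 1)`, where `A` is summable and `A (X k), A (Y k) ≥ 2 ^ (-k)`, and
`q none ∝ 1`. Then `E f(T)` is finite for the return time to the base, because `∑ A m < ∞`. The
return to `none` may contain two excursions, of lengths `X k + 1` and `Y k + 1`, so its `f`-moment
is at least of order `4 ^ (-k) * f (X k + Y k + 2) / (f (X k + 1) * f (Y k + 1)) ≥ k` for every `k`,
hence infinite.

All quantities are computed from one first-step equation, `wsum_step`, for weighted sums of the
first hitting distribution.
-/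

open Filter
open scoped ENNReal

namespace MCPaper

variable {E : Type*}

/-- the class `𝒢`: a finite generalized `f`-moment of the return time of one state implies
finiteness for the return times of all states, for every irreducible recurrent chain. -/
def MemG (f : ℕ → ℝ) : Prop :=
  ∀ (S : Type) [Countable S] (P : S → S → ℝ≥0∞),
    IsStochastic P → IsIrreducible P → IsRecurrent P →
      ∀ i : S, momGen f P i i < ⊤ → ∀ j : S, momGen f P j j < ⊤

/-- the class `ℋ`: finiteness of `E f(T_ij)` and `E f(T_ji)` for a pair of states implies
finiteness of `E f(T_kl)` for all pairs, for every irreducible recurrent chain. -/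
def MemH (f : ℕ → ℝ) : Prop :=
  ∀ (S : Type) [Countable S] (P : S → S → ℝ≥0∞),
    IsStochastic P → IsIrreducible P → IsRecurrent P →
      ∀ i j : S, momGen f P i j < ⊤ → momGen f P j i < ⊤ →
        ∀ k l : S, momGen f P k l < ⊤

/-- The weighted sum `∑ₙ g n * P_x(T = n + 1)`, with `T` the first hitting time of `t`; so `g n` is
the value attached to the time `n + 1`, and the time `0`, of probability zero, is dropped. -/
noncomputable def wsum (P : E → E → ℝ≥0∞) (t : E) (g : ℕ → ℝ≥0∞) (x : E) : ℝ≥0∞ :=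
  ∑' n, g n * hitAvoid P t t (n + 1) x

open Classical in
/-- First-step analysis. -/
lemma wsum_step (P : E → E → ℝ≥0∞) (t : E) (g : ℕ → ℝ≥0∞) (x : E) :
    wsum P t g x = g 0 * P x t +
      ∑' k, if k = t then 0 else P x k * wsum P t (fun n => g (n + 1)) k := by
  unfold wsum
  rw [tsum_eq_zero_add' ENNReal.summable]
  congr 1
  simp_rw [hitAvoid, ← ENNReal.tsum_mul_left]
  rw [ENNReal.tsum_comm]
  refine tsum_congr fun k => ?_
  by_cases hk : k = t
  · simp [hk]
  · simp only [hk, or_self, if_false]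
    exact tsum_congr fun n => by ring

lemma momGen_eq_wsum (f : ℕ → ℝ) (P : E → E → ℝ≥0∞) (i j : E) :
    momGen f P i j = wsum P j (fun n => ENNReal.ofReal (f (n + 1))) i := by
  unfold momGen wsum firstHit
  rw [tsum_eq_zero_add' ENNReal.summable]
  simp [hitAvoid]

lemma tsum_firstHit_eq_wsum (P : E → E → ℝ≥0∞) (i j : E) :
    ∑' n, firstHit P i j n = wsum P j (fun _ => 1) i := by
  unfold wsum firstHit
  rw [tsum_eq_zero_add' ENNReal.summable]
  simp [hitAvoid]

lemma wsum_one_le (P : E → E → ℝ≥0∞) (hP : IsStochastic P) (t x : E) :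
    wsum P t (fun _ => 1) x ≤ 1 := by
  classical
  -- `wsum` with the truncated weight `1_{n < N}` is `P_x(T ≤ N)`.
  have key : ∀ N x, wsum P t (fun n => if n < N then 1 else 0) x ≤ 1 := by
    intro N
    induction N with
    | zero => intro x; simp [wsum]
    | succ N ih =>
      intro x
      rw [wsum_step]
      refine le_trans ?_ ((ENNReal.tsum_eq_add_tsum_ite t).symm.trans (hP x)).le
      simp only [Nat.zero_lt_succ, if_true, one_mul]
      gcongr with k
      split_ifs
      · exact le_rfl
      · simp only [add_lt_add_iff_right]
        exact mul_le_of_le_one_right' (ih k)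
  unfold wsum
  rw [ENNReal.tsum_eq_iSup_nat]
  refine iSup_le fun N => le_trans ?_ (key N x)
  refine le_trans (le_of_eq ?_) (ENNReal.sum_le_tsum (Finset.range N))
  exact Finset.sum_congr rfl fun n hn => by simp [Finset.mem_range.1 hn]

lemma tsum_option {α : Type*} (g : Option α → ℝ≥0∞) :
    ∑' x, g x = g none + ∑' a, g (some a) := by
  rw [← (Equiv.optionEquivSumPUnit.{0} α).symm.tsum_eq, ENNReal.summable.tsum_sum
    ENNReal.summable, add_comm]
  simp

/-! ### The excursion chain -/

/-- The deterministic move from a state other than `some 0`; the value at `some 0` is irrelevant. -/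
def down : Option ℕ → Option ℕ
  | none => some 0
  | some m => some (m - 1)

/-- The transition matrix on `Option ℕ`: jump from `some 0` with law `q`, move by `down` from
everywhere else. -/
noncomputable def chain (q : Option ℕ → ℝ≥0∞) (x y : Option ℕ) : ℝ≥0∞ :=
  if x = some 0 then q y else if y = down x then 1 else 0

variable {q : Option ℕ → ℝ≥0∞}

lemma chain_stochastic (hq : ∑' y, q y = 1) : IsStochastic (chain q) := by
  intro x
  by_cases hx : x = some 0 <;> simp [chain, hx, hq]

lemma wsum_down (t : Option ℕ) (g : ℕ → ℝ≥0∞) {x : Option ℕ} (hx : x ≠ some 0) :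
    wsum (chain q) t g x =
      if down x = t then g 0 else wsum (chain q) t (fun n => g (n + 1)) (down x) := by
  rw [wsum_step, tsum_eq_single (down x)]
  · by_cases h : down x = t
    · simp [chain, hx, h]
    · simp [chain, hx, h, Ne.symm h]
  · intro k hk
    simp [chain, hx, hk]

lemma wsum_zero (t : Option ℕ) (g : ℕ → ℝ≥0∞) :
    wsum (chain q) t g (some 0) = g 0 * q t +
      ∑' k, if k = t then 0 else q k * wsum (chain q) t (fun n => g (n + 1)) k := by
  classical
  rw [wsum_step]
  simp [chain]

/-- Induction along the deterministic moves: every state leads down to `some 0`. -/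
lemma down_induction {p : Option ℕ → Prop} (h0 : p (some 0))
    (hd : ∀ x, x ≠ some 0 → p (down x) → p x) : ∀ x, p x := by
  have hs : ∀ m, p (some m) := by
    intro m
    induction m with
    | zero => exact h0
    | succ m ih => exact hd _ (by simp) ih
  intro x
  cases x with
  | none => exact hd _ (by simp) h0
  | some m => exact hs m

lemma chain_irreducible (hpos : ∀ y, 0 < q y) : IsIrreducible (chain q) := by
  intro i j
  -- Positivity of the total mass is equivalent to positivity of one of the terms.
  have key : ∀ x, wsum (chain q) j (fun _ => 1) x ≠ 0 := by
    refine down_induction ?_ ?_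
    · rw [wsum_zero]
      simp [(hpos j).ne']
    · intro x hx ih
      rw [wsum_down _ _ hx]
      split_ifs
      · simp
      · exact ih
  by_contra! h
  apply key i
  rw [← tsum_firstHit_eq_wsum]
  simpa using fun n => nonpos_iff_eq_zero.1 (h n)

lemma chain_recurrent (hpos : ∀ y, 0 < q y) (hq : ∑' y, q y = 1) : IsRecurrent (chain q) := by
  intro j
  rw [tsum_firstHit_eq_wsum]
  have hle := wsum_one_le (chain q) (chain_stochastic hq) j
  set H := wsum (chain q) j (fun _ => 1) with hH
  -- Downward moves either hit `j` for sure or lead to `some 0`.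
  have hmin : ∀ x, H (some 0) ≤ H x := by
    refine down_induction le_rfl ?_
    intro x hx ih
    rw [hH, wsum_down _ _ hx]
    split_ifs
    · exact hle _
    · exact ih
  have h0 : 1 ≤ H (some 0) := by
    have h1 : H (some 0) = q j + ∑' k, if k = j then 0 else q k * H k := by
      rw [hH, wsum_zero, one_mul]
    have h2 : H (some 0) = q j * H (some 0) + ∑' k, if k = j then 0 else q k * H (some 0) := by
      conv_lhs => rw [← one_mul (H (some 0)), ← hq, ← ENNReal.tsum_mul_right]
      rw [ENNReal.tsum_eq_add_tsum_ite j]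
      congr!
    have h3 : (∑' k, if k = j then 0 else q k * H (some 0)) ≤
        ∑' k, if k = j then 0 else q k * H k := by
      gcongr with k
      split_ifs
      · exact le_rfl
      · gcongr
        exact hmin k
    have hfin : (∑' k, if k = j then 0 else q k * H (some 0)) ≠ ⊤ := by
      refine ne_top_of_le_ne_top ENNReal.one_ne_top (le_trans ?_ (hle (some 0)))
      conv_rhs => rw [h2]
      exact le_add_self
    have h4 : q j * 1 ≤ q j * H (some 0) := by
      rw [mul_one]
      refine (ENNReal.add_le_add_iff_right hfin).1 ?_
      rw [← h2]
      exact (add_le_add_right h3 _).trans h1.ge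
    have hqj : q j ≠ ⊤ := ne_top_of_le_ne_top ENNReal.one_ne_top (hq ▸ ENNReal.le_tsum j)
    exact (ENNReal.mul_le_mul_iff_right (hpos j).ne' hqj).1 h4
  exact le_antisymm (hle j) (h0.trans (hmin j))

/-- The deterministic descent from `some (m + 1)` to the base takes exactly `m + 1` steps. -/
lemma wsum_base_descent (m : ℕ) (g : ℕ → ℝ≥0∞) :
    wsum (chain q) (some 0) g (some (m + 1)) = g m := by
  induction m generalizing g with
  | zero => rw [wsum_down _ _ (by simp)]; simp [down]
  | succ m ih => rw [wsum_down _ _ (by simp)]; simp [down, ih]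

/-- The return time to the base is `2` through `none` and `m + 1` through `some m`. -/
lemma wsum_base_le (g : ℕ → ℝ≥0∞) :
    wsum (chain q) (some 0) g (some 0) ≤ g 0 * q (some 0) + (q none * g 1 +
      ∑' m, q (some m) * g m) := by
  rw [wsum_zero, tsum_option]
  gcongr with m
  · rw [wsum_down _ _ (by simp)]
    simp [down]
  · cases m with
    | zero => simp
    | succ m => rw [wsum_base_descent]; simp

/-- The descent from `some m` avoids `none` and only delays the hitting time. -/
lemma wsum_none_descent (m : ℕ) (g : ℕ → ℝ≥0∞) :
    wsum (chain q) none g (some m) = wsum (chain q) none (fun n => g (n + m)) (some 0) := by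
  induction m generalizing g with
  | zero => rfl
  | succ m ih =>
    rw [wsum_down _ _ (by simp)]
    simp only [down, reduceCtorEq, if_false, Nat.add_sub_cancel, ih]
    rfl

lemma wsum_none_excursion (m : ℕ) (g : ℕ → ℝ≥0∞) :
    q (some m) * wsum (chain q) none (fun n => g (n + m + 1)) (some 0) ≤
      wsum (chain q) none g (some 0) := by
  rw [wsum_zero none g]
  refine le_trans ?_ le_add_self
  refine le_trans (le_of_eq ?_) (ENNReal.le_tsum (some m))
  simp only [reduceCtorEq, if_false]
  rw [wsum_none_descent m fun n => g (n + 1)]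

/-- The return to `none` through two excursions of lengths `a + 1` and `b + 1` takes `a + b + 4`
steps. -/
lemma wsum_none_ge (a b : ℕ) (g : ℕ → ℝ≥0∞) :
    q (some a) * (q (some b) * (g (a + b + 3) * q none)) ≤ wsum (chain q) none g none := by
  rw [wsum_down _ _ (by simp)]
  simp only [down, reduceCtorEq, if_false]
  refine le_trans ?_ (wsum_none_excursion a _)
  gcongr
  refine le_trans ?_ (wsum_none_excursion b _)
  gcongr
  rw [wsum_zero]
  refine le_trans (le_of_eq ?_) le_self_add
  congr 2
  omega

/-! ### The jump law -/

/-- A finite measure on `ℕ` charging `k`, `X k` and `Y k` with at least `2 ^ (-k)`. -/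
noncomputable def mass (X Y : ℕ → ℕ) (m : ℕ) : ℝ≥0∞ :=
  ∑' k, (2⁻¹ : ℝ≥0∞) ^ k *
    ((if m = X k then 1 else 0) + (if m = Y k then 1 else 0) + (if m = k then 1 else 0))

lemma tsum_mass_ne_top (X Y : ℕ → ℕ) : ∑' m, mass X Y m ≠ ⊤ := by
  unfold mass
  rw [ENNReal.tsum_comm]
  simp_rw [ENNReal.tsum_mul_left, ENNReal.tsum_add, tsum_ite_eq]
  rw [ENNReal.tsum_mul_right, ENNReal.tsum_geometric]
  simp
  exact ENNReal.mul_ne_top (by simp) (by norm_num)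

lemma le_mass (X Y : ℕ → ℕ) {m k : ℕ} (h : m = X k ∨ m = Y k ∨ m = k) :
    (2⁻¹ : ℝ≥0∞) ^ k ≤ mass X Y m := by
  refine le_trans ?_ (ENNReal.le_tsum k)
  refine le_mul_of_one_le_right' ?_
  rcases h with h | h | h
  · rw [if_pos h, add_assoc]; exact le_self_add
  · rw [if_pos h, add_right_comm]; exact le_add_self
  · rw [if_pos h]; exact le_add_self

/-- The jump law before normalisation. -/
noncomputable def weight (X Y : ℕ → ℕ) (F : ℕ → ℝ≥0∞) : Option ℕ → ℝ≥0∞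
  | none => 1
  | some m => mass X Y m / F m

lemma tsum_weight_ne_top (X Y : ℕ → ℕ) {F : ℕ → ℝ≥0∞} (hF : Monotone F) (h0 : F 0 ≠ 0) :
    ∑' x, weight X Y F x ≠ ⊤ := by
  rw [tsum_option]
  refine ENNReal.add_ne_top.2 ⟨by simp [weight], ?_⟩
  have : ∑' m, weight X Y F (some m) ≤ ∑' m, mass X Y m * (F 0)⁻¹ := by
    gcongr with m
    simp only [weight, div_eq_mul_inv]
    gcongr
    exact hF (Nat.zero_le m)
  refine ne_top_of_le_ne_top ?_ this
  rw [ENNReal.tsum_mul_right]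
  exact ENNReal.mul_ne_top (tsum_mass_ne_top X Y) (by simpa using h0)

theorem stmt_4 (f : ℕ → ℝ) (hpos : ∀ n, 0 < f n) (hmono : Monotone f)
    (htop : Tendsto f atTop atTop) (hG : MemG f) :
    ∃ K : ℝ, 0 < K ∧ ∀ x y : ℕ, 0 < x → 0 < y → f (x + y) ≤ K * f x * f y := by
  by_contra! hcon
  have hex : ∀ k : ℕ, ∃ a b : ℕ, ((k + 1) * 4 ^ k : ℝ) * f (a + 1) * f (b + 1) < f (a + b + 2) := by
    intro k
    obtain ⟨x, y, hx, hy, h⟩ := hcon ((k + 1) * 4 ^ k) (by positivity)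
    obtain ⟨a, rfl⟩ := Nat.exists_eq_add_of_le' hx
    obtain ⟨b, rfl⟩ := Nat.exists_eq_add_of_le' hy
    refine ⟨a, b, ?_⟩
    rwa [show a + 1 + (b + 1) = a + b + 2 by ring] at h
  choose X Y hXY using hex
  set F : ℕ → ℝ≥0∞ := fun n => ENNReal.ofReal (f (n + 1)) with hFdef
  have hF0 : ∀ n, F n ≠ 0 := fun n => by simpa [hFdef] using hpos (n + 1)
  have hFtop : ∀ n, F n ≠ ⊤ := fun n => ENNReal.ofReal_ne_top
  have hFmono : Monotone F := fun a b hab =>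
    ENNReal.ofReal_le_ofReal (hmono (Nat.add_le_add_right hab 1))
  have hF : ∀ k : ℕ, (k : ℝ≥0∞) * 4 ^ k * F (X k) * F (Y k) ≤ F (X k + Y k + 3) := by
    intro k
    have h1 : (k * 4 ^ k : ℝ) * f (X k + 1) * f (Y k + 1) ≤ f (X k + Y k + 3 + 1) := by
      refine le_trans ?_ ((hXY k).le.trans (hmono (by omega)))
      have := hpos (X k + 1)
      have := hpos (Y k + 1)
      gcongr
      linarith
    have h2 := ENNReal.ofReal_le_ofReal h1
    rw [ENNReal.ofReal_mul (mul_nonneg (by positivity) (hpos _).le),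
      ENNReal.ofReal_mul (by positivity), ENNReal.ofReal_mul (by positivity),
      ENNReal.ofReal_pow (by norm_num), ENNReal.ofReal_natCast] at h2
    simpa [hFdef] using h2
  set w := weight X Y F with hw
  set Z := ∑' x, w x with hZ
  have hZtop : Z ≠ ⊤ := tsum_weight_ne_top X Y hFmono (hF0 0)
  have hZ0 : Z ≠ 0 := by
    have h1 : w none ≤ Z := ENNReal.le_tsum none
    intro h
    simp [h, hw, weight] at h1
  have hwpos : ∀ x, 0 < w x := by
    intro x
    cases x with
    | none => simp [hw, weight]
    | some m =>
      refine ENNReal.div_pos (ne_of_gt (lt_of_lt_of_le ?_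
        (le_mass X Y (m := m) (k := m) (by simp)))) (hFtop m)
      exact ENNReal.pow_pos (by simp) m
  set q : Option ℕ → ℝ≥0∞ := fun x => w x * Z⁻¹ with hq
  have hqpos : ∀ x, 0 < q x := fun x =>
    ENNReal.mul_pos (hwpos x).ne' (by simpa using hZtop)
  have hqsum : ∑' x, q x = 1 := by
    rw [hq, ENNReal.tsum_mul_right]
    exact ENNReal.mul_inv_cancel hZ0 hZtop
  have hqtop : ∀ x, q x ≠ ⊤ := fun x =>
    ne_top_of_le_ne_top ENNReal.one_ne_top (hqsum ▸ ENNReal.le_tsum x)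
  have hbase : momGen f (chain q) (some 0) (some 0) < ⊤ := by
    rw [momGen_eq_wsum]
    refine lt_of_le_of_lt (wsum_base_le F) ?_
    refine ENNReal.add_lt_top.2 ⟨ENNReal.mul_lt_top (hFtop 0).lt_top (hqtop _).lt_top,
      ENNReal.add_lt_top.2 ⟨ENNReal.mul_lt_top (hqtop _).lt_top (hFtop 1).lt_top, ?_⟩⟩
    have h1 : ∀ m, q (some m) * F m = mass X Y m * Z⁻¹ := by
      intro m
      simp only [hq, hw, weight]
      rw [mul_right_comm, ENNReal.div_mul_cancel (hF0 m) (hFtop m)]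
    simp_rw [h1]
    rw [ENNReal.tsum_mul_right]
    exact ENNReal.mul_lt_top (tsum_mass_ne_top X Y).lt_top (by simpa using hZ0.bot_lt)
  have hnone := hG (Option ℕ) (chain q) (chain_stochastic hqsum) (chain_irreducible hqpos)
    (chain_recurrent hqpos hqsum) (some 0) hbase none
  rw [momGen_eq_wsum] at hnone
  have hlow : ∀ k : ℕ, (k : ℝ≥0∞) * Z⁻¹ ^ 3 ≤ wsum (chain q) none F none := by
    intro k
    refine le_trans ?_ (wsum_none_ge (X k) (Y k) F)
    have hx : (2⁻¹ : ℝ≥0∞) ^ k / F (X k) * Z⁻¹ ≤ q (some (X k)) := by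
      simp only [hq, hw, weight]
      gcongr
      exact le_mass X Y (by simp)
    have hy : (2⁻¹ : ℝ≥0∞) ^ k / F (Y k) * Z⁻¹ ≤ q (some (Y k)) := by
      simp only [hq, hw, weight]
      gcongr
      exact le_mass X Y (by simp)
    have hn : Z⁻¹ = q none := by simp [hq, hw, weight]
    have h4 : (2⁻¹ : ℝ≥0∞) ^ k * (2⁻¹ : ℝ≥0∞) ^ k * 4 ^ k = 1 := by
      rw [← mul_pow, ← mul_pow, ← ENNReal.mul_inv (by simp) (by simp),
        show (2 * 2 : ℝ≥0∞) = 4 by norm_num, ENNReal.inv_mul_cancel (by simp) (by simp), one_pow]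
    calc (k : ℝ≥0∞) * Z⁻¹ ^ 3
        = k * ((2⁻¹ : ℝ≥0∞) ^ k * (2⁻¹ : ℝ≥0∞) ^ k * 4 ^ k) * (F (X k) * (F (X k))⁻¹) *
            (F (Y k) * (F (Y k))⁻¹) * Z⁻¹ ^ 3 := by
          rw [h4, ENNReal.mul_inv_cancel (hF0 _) (hFtop _),
            ENNReal.mul_inv_cancel (hF0 _) (hFtop _)]
          simp
      _ = (2⁻¹ : ℝ≥0∞) ^ k / F (X k) * Z⁻¹ * ((2⁻¹ : ℝ≥0∞) ^ k / F (Y k) * Z⁻¹ *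
            ((k : ℝ≥0∞) * 4 ^ k * F (X k) * F (Y k) * Z⁻¹)) := by
          simp only [div_eq_mul_inv]
          ring
      _ ≤ _ := by
          rw [← hn]
          gcongr
          exact hF k
  have hc : Z⁻¹ ^ 3 ≠ 0 := pow_ne_zero _ (by simpa using hZtop)
  refine absurd hnone (not_lt.2 ?_)
  rw [← ENNReal.top_mul hc, ← ENNReal.iSup_natCast, ENNReal.iSup_mul]
  exact iSup_le hlow

end MCPaper
end
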